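/- Let H : ℝ³ → ℝ be smooth with H(p) > 0 for every p. Write points of ℝ³ as p = (z, x₁, x₂) and define the 1-form α on ℝ³ by α(p)(v) = H(p) · (v_z + x₁ v_{x₂}) for v = (v_z, v_{x₁}, v_{x₂}) ∈ ℝ³ (that is, α = H (dz + x₁ dx₂)). Define the vector field R(p) = H(p)^{−2} · ( H(p) + x₁ ∂_{x₁}H(p), ∂_{x₂}H(p) − x₁ ∂_z H(p), −∂_{x₁}H(p) ). Then for every p ∈ ℝ³: (i) α(p)(R(p)) = 1; (ii) dα(p)(R(p), v) = 0 for every v ∈ ℝ³; (iii) DH(p)(R(p)) = H(p)^{−1} ∂_z H(p). -/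

import Mathlib

/-!
For a 1-form `lam` and a function `f`, `d(f lam) = f dlam + df ∧ lam`. Let `R₀` be a Reeb vector of
`lam` and let `Y` be the vector with `lam(Y) = 0` and `dlam(Y, ·) = df - df(R₀) lam`. Evaluating the
second equation at `Y` gives `df(Y) = 0`, and then `f⁻² (f R₀ + Y)` satisfies the Reeb equations for
`f lam`, while `df` takes the value `f⁻¹ df(R₀)` on it. For `lam = dz + x₁ dx₂` we have
`dlam = dx₁ ∧ dx₂`, `R₀ = ∂_z` and `Y = (x₁ ∂₁f, ∂₂f - x₁ ∂_z f, -∂₁f)`.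
-/

section ReebVector

variable {𝕜 E : Type*} [NontriviallyNormedField 𝕜] [NormedAddCommGroup E] [NormedSpace 𝕜 E]

/-- The exterior derivative of a 1-form, as a function of two vectors. One-forms are maps into the
dual space here, as opposed to the alternating maps of Mathlib's `extDeriv`. -/
noncomputable def oneFormExtDeriv (α : E → E →L[𝕜] 𝕜) (p u v : E) : 𝕜 :=
  fderiv 𝕜 α p u v - fderiv 𝕜 α p v u

theorem oneFormExtDeriv_self (α : E → E →L[𝕜] 𝕜) (p u : E) : oneFormExtDeriv α p u u = 0 :=
  sub_self _

theorem oneFormExtDeriv_smul_add_left (α : E → E →L[𝕜] 𝕜) (c d : 𝕜) (p u u' v : E) :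
    oneFormExtDeriv α p (c • u + d • u') v =
      c * oneFormExtDeriv α p u v + d * oneFormExtDeriv α p u' v := by
  simp only [oneFormExtDeriv, map_add, map_smul, add_apply, smul_apply, smul_eq_mul]
  ring

theorem oneFormExtDeriv_smul {f : E → 𝕜} {lam : E → E →L[𝕜] 𝕜} {p : E}
    (hf : DifferentiableAt 𝕜 f p) (hlam : DifferentiableAt 𝕜 lam p) (u v : E) :
    oneFormExtDeriv (f • lam) p u v =
      f p * oneFormExtDeriv lam p u v + (fderiv 𝕜 f p u * lam p v - fderiv 𝕜 f p v * lam p u) := by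
  simp only [oneFormExtDeriv, fderiv_smul hf hlam, add_apply, smul_apply,
    ContinuousLinearMap.smulRight_apply, smul_eq_mul]
  ring

/-- The equations `α(R) = 1` and `dα(R, ·) = 0` at the point `p`, which characterize the value at
`p` of the Reeb vector field when `α` is a contact form. -/
structure IsReebVector (α : E → E →L[𝕜] 𝕜) (p R : E) : Prop where
  apply_eq_one : α p R = 1
  extDeriv_eq_zero (v : E) : oneFormExtDeriv α p R v = 0

/-- The equations `lam(Y) = 0` and `dlam(Y, ·) = df - df(R₀) lam` at the point `p`. When `lam` is a
contact form with Reeb vector `R₀`, they characterize, up to the sign convention, the horizontal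
part of the contact Hamiltonian vector field of `f`. -/
structure IsHorizontalHamiltonian (lam : E → E →L[𝕜] 𝕜) (R₀ : E) (f : E → 𝕜) (p Y : E) :
    Prop where
  apply_eq_zero : lam p Y = 0
  extDeriv_eq (v : E) : oneFormExtDeriv lam p Y v = fderiv 𝕜 f p v - fderiv 𝕜 f p R₀ * lam p v

variable {f : E → 𝕜} {lam : E → E →L[𝕜] 𝕜} {p R₀ Y : E}

theorem IsHorizontalHamiltonian.fderiv_eq_zero (hY : IsHorizontalHamiltonian lam R₀ f p Y) :
    fderiv 𝕜 f p Y = 0 := by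
  have h := hY.extDeriv_eq Y
  rwa [oneFormExtDeriv_self, hY.apply_eq_zero, mul_zero, sub_zero, eq_comm] at h

theorem IsHorizontalHamiltonian.fderiv_conformalReeb (hY : IsHorizontalHamiltonian lam R₀ f p Y)
    (hfp : f p ≠ 0) :
    fderiv 𝕜 f p ((f p ^ 2)⁻¹ • (f p • R₀ + Y)) = (f p)⁻¹ * fderiv 𝕜 f p R₀ := by
  simp only [map_smul, map_add, hY.fderiv_eq_zero, smul_eq_mul]
  field_simp
  ring

theorem IsReebVector.conformal (hR₀ : IsReebVector lam p R₀)
    (hY : IsHorizontalHamiltonian lam R₀ f p Y) (hf : DifferentiableAt 𝕜 f p)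
    (hlam : DifferentiableAt 𝕜 lam p) (hfp : f p ≠ 0) :
    IsReebVector (f • lam) p ((f p ^ 2)⁻¹ • (f p • R₀ + Y)) := by
  have hlam_apply : lam p ((f p ^ 2)⁻¹ • (f p • R₀ + Y)) = (f p)⁻¹ := by
    simp only [map_smul, map_add, hR₀.apply_eq_one, hY.apply_eq_zero, smul_eq_mul]
    field_simp
    ring
  have hlam_deriv (v : E) : oneFormExtDeriv lam p ((f p ^ 2)⁻¹ • (f p • R₀ + Y)) v =
      (f p ^ 2)⁻¹ * (fderiv 𝕜 f p v - fderiv 𝕜 f p R₀ * lam p v) := by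
    rw [smul_add, smul_smul, oneFormExtDeriv_smul_add_left, hR₀.extDeriv_eq_zero, hY.extDeriv_eq,
      mul_zero, zero_add]
  refine ⟨?_, fun v => ?_⟩
  · rw [Pi.smul_apply', smul_apply, hlam_apply, smul_eq_mul, mul_inv_cancel₀ hfp]
  · rw [oneFormExtDeriv_smul hf hlam, hlam_deriv, hlam_apply, hY.fderiv_conformalReeb hfp]
    field_simp
    ring

end ReebVector

theorem map_eq_sum_coord_smul {R M F : Type*} [Semiring R] [AddCommMonoid M] [Module R M]
    [FunLike F (R × R × R) M] [LinearMapClass F R (R × R × R) M] (L : F) (v : R × R × R) :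
    L v = v.1 • L (1, 0, 0) + v.2.1 • L (0, 1, 0) + v.2.2 • L (0, 0, 1) := by
  simp only [← map_smul, ← map_add, Prod.smul_mk, Prod.mk_add_mk, smul_eq_mul, mul_one, mul_zero,
    add_zero, zero_add]

section StdContactForm

variable {𝕜 : Type*} [NontriviallyNormedField 𝕜]

/-- The standard contact form `dz + x₁ dx₂` in the coordinates `(z, x₁, x₂)`. -/
def stdContactForm (p : 𝕜 × 𝕜 × 𝕜) : 𝕜 × 𝕜 × 𝕜 →L[𝕜] 𝕜 :=
  .fst 𝕜 𝕜 (𝕜 × 𝕜) + p.2.1 • (.snd 𝕜 𝕜 𝕜 ∘L .snd 𝕜 𝕜 (𝕜 × 𝕜))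

theorem stdContactForm_apply (p v : 𝕜 × 𝕜 × 𝕜) : stdContactForm p v = v.1 + p.2.1 * v.2.2 :=
  rfl

theorem hasFDerivAt_stdContactForm (p : 𝕜 × 𝕜 × 𝕜) :
    HasFDerivAt stdContactForm
      ((.fst 𝕜 𝕜 𝕜 ∘L .snd 𝕜 𝕜 (𝕜 × 𝕜) : 𝕜 × 𝕜 × 𝕜 →L[𝕜] 𝕜).smulRight
        (.snd 𝕜 𝕜 𝕜 ∘L .snd 𝕜 𝕜 (𝕜 × 𝕜) : 𝕜 × 𝕜 × 𝕜 →L[𝕜] 𝕜)) p :=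
  (hasFDerivAt_snd.fst.smul_const _).const_add _

theorem oneFormExtDeriv_stdContactForm (p u v : 𝕜 × 𝕜 × 𝕜) :
    oneFormExtDeriv stdContactForm p u v = u.2.1 * v.2.2 - v.2.1 * u.2.2 := by
  rw [oneFormExtDeriv, (hasFDerivAt_stdContactForm p).fderiv]
  rfl

theorem isReebVector_stdContactForm (p : 𝕜 × 𝕜 × 𝕜) :
    IsReebVector stdContactForm p (1, 0, 0) where
  apply_eq_one := by rw [stdContactForm_apply, mul_zero, add_zero]
  extDeriv_eq_zero v := by rw [oneFormExtDeriv_stdContactForm, zero_mul, mul_zero, sub_zero]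

theorem isHorizontalHamiltonian_stdContactForm (f : 𝕜 × 𝕜 × 𝕜 → 𝕜) (p : 𝕜 × 𝕜 × 𝕜) :
    IsHorizontalHamiltonian stdContactForm (1, 0, 0) f p
      (p.2.1 * fderiv 𝕜 f p (0, 1, 0),
        fderiv 𝕜 f p (0, 0, 1) - p.2.1 * fderiv 𝕜 f p (1, 0, 0),
        -fderiv 𝕜 f p (0, 1, 0)) where
  apply_eq_zero := by
    rw [stdContactForm_apply]
    ring
  extDeriv_eq v := by
    rw [oneFormExtDeriv_stdContactForm, stdContactForm_apply,
      map_eq_sum_coord_smul (fderiv 𝕜 f p) v]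
    simp only [smul_eq_mul]
    ring

end StdContactForm

theorem stmt5_general {𝕜 : Type*} [NontriviallyNormedField 𝕜] {H : 𝕜 × 𝕜 × 𝕜 → 𝕜}
    {p : 𝕜 × 𝕜 × 𝕜} (hH : DifferentiableAt 𝕜 H p) (hHp : H p ≠ 0)
    {α : 𝕜 × 𝕜 × 𝕜 → (𝕜 × 𝕜 × 𝕜 →L[𝕜] 𝕜)}
    (hα : ∀ q v : 𝕜 × 𝕜 × 𝕜, α q v = H q * (v.1 + q.2.1 * v.2.2))
    {R : 𝕜 × 𝕜 × 𝕜}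
    (hR : R = ((H p) ^ 2)⁻¹ •
      ((H p + p.2.1 * fderiv 𝕜 H p (0, 1, 0),
        fderiv 𝕜 H p (0, 0, 1) - p.2.1 * fderiv 𝕜 H p (1, 0, 0),
        -fderiv 𝕜 H p (0, 1, 0)) : 𝕜 × 𝕜 × 𝕜)) :
    α p R = 1 ∧
    (∀ v : 𝕜 × 𝕜 × 𝕜, fderiv 𝕜 α p R v - fderiv 𝕜 α p v R = 0) ∧
    fderiv 𝕜 H p R = (H p)⁻¹ * fderiv 𝕜 H p (1, 0, 0) := by
  have hα_eq : α = H • stdContactForm := funext fun q => ContinuousLinearMap.ext (hα q)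
  have hY := isHorizontalHamiltonian_stdContactForm H p
  have hR_eq : R = (H p ^ 2)⁻¹ • (H p • (1, 0, 0) + (p.2.1 * fderiv 𝕜 H p (0, 1, 0),
      fderiv 𝕜 H p (0, 0, 1) - p.2.1 * fderiv 𝕜 H p (1, 0, 0), -fderiv 𝕜 H p (0, 1, 0))) := by
    simp only [hR, Prod.smul_mk, Prod.mk_add_mk, smul_eq_mul, mul_one, mul_zero, zero_add]
  have hReeb : IsReebVector α p R := by
    rw [hα_eq, hR_eq]
    exact (isReebVector_stdContactForm p).conformal hY hH
      (hasFDerivAt_stdContactForm p).differentiableAt hHp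
  have hH_R : fderiv 𝕜 H p R = (H p)⁻¹ * fderiv 𝕜 H p (1, 0, 0) :=
    hR_eq ▸ hY.fderiv_conformalReeb hHp
  exact ⟨hReeb.apply_eq_one, hReeb.extDeriv_eq_zero, hH_R⟩

theorem stmt5 (H : ℝ × ℝ × ℝ → ℝ) (hH : ContDiff ℝ (⊤ : ℕ∞) H) (hpos : ∀ p, 0 < H p)
    (α : ℝ × ℝ × ℝ → (ℝ × ℝ × ℝ →L[ℝ] ℝ))
    (hα : ∀ p v : ℝ × ℝ × ℝ, α p v = H p * (v.1 + p.2.1 * v.2.2))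
    (R : ℝ × ℝ × ℝ → ℝ × ℝ × ℝ)
    (hR : ∀ p : ℝ × ℝ × ℝ,
      R p = ((H p) ^ 2)⁻¹ •
        ((H p + p.2.1 * fderiv ℝ H p (0, 1, 0),
          fderiv ℝ H p (0, 0, 1) - p.2.1 * fderiv ℝ H p (1, 0, 0),
          -fderiv ℝ H p (0, 1, 0)) : ℝ × ℝ × ℝ)) :
    ∀ p : ℝ × ℝ × ℝ,
      α p (R p) = 1 ∧
      (∀ v : ℝ × ℝ × ℝ, fderiv ℝ α p (R p) v - fderiv ℝ α p v (R p) = 0) ∧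
      fderiv ℝ H p (R p) = (H p)⁻¹ * fderiv ℝ H p (1, 0, 0) :=
  fun p => stmt5_general (hH.differentiable (by simp) p) (hpos p).ne' hα (hR p)
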